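/- Every packing of the Euclidean plane by disks of radius 1 has density at most π/√12. -/

import Mathlib

open Metric Set

noncomputable section

/-- The Euclidean plane. -/
abbrev Plane : Type := EuclideanSpace ℝ (Fin 2)

/-- A closed disk in the plane, given by its center and (positive) radius. -/
structure Disk where
  center : Plane
  radius : ℝ
  radius_pos : 0 < radius

/-- The set of points of a disk (a closed ball). -/
def Disk.set (d : Disk) : Set Plane := closedBall d.center d.radius

/-- A packing: a family of closed disks with pairwise disjoint interiors. -/
def IsPacking (P : Set Disk) : Prop :=
  ∀ d ∈ P, ∀ d' ∈ P, d ≠ d' → Disjoint (interior d.set) (interior d'.set)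

/-- Two disks are (externally) tangent: they intersect in exactly one point. -/
def Disk.Tangent (d d' : Disk) : Prop :=
  dist d.center d'.center = d.radius + d'.radius

/-- The union of the disks of a packing. -/
def packingUnion (P : Set Disk) : Set Plane := ⋃ d ∈ P, d.set

/-- A packing is compact (triangulated) if every connected component of the
complement of the union of the disks is bounded and its closure meets exactly
three of the disks, these three disks being pairwise tangent. -/
def IsCompactPacking (P : Set Disk) : Prop :=
  IsPacking P ∧
  ∀ x ∈ (packingUnion P)ᶜ,
    Bornology.IsBounded (connectedComponentIn (packingUnion P)ᶜ x) ∧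
    ∃ d₁ d₂ d₃ : Disk, d₁ ∈ P ∧ d₂ ∈ P ∧ d₃ ∈ P ∧
      d₁ ≠ d₂ ∧ d₁ ≠ d₃ ∧ d₂ ≠ d₃ ∧
      d₁.Tangent d₂ ∧ d₁.Tangent d₃ ∧ d₂.Tangent d₃ ∧
      {d ∈ P | (closure (connectedComponentIn (packingUnion P)ᶜ x) ∩ d.set).Nonempty}
        = {d₁, d₂, d₃}

/-- A packing uses the radius `r` if one of its disks has radius `r`. -/
def UsesRadius (P : Set Disk) (r : ℝ) : Prop := ∃ d ∈ P, d.radius = r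

/-- All radii of the disks of `P` belong to `S`. -/
def RadiiIn (P : Set Disk) (S : Set ℝ) : Prop := ∀ d ∈ P, d.radius ∈ S

/-- The square `[-r, r]²`. -/
def square (r : ℝ) : Set Plane := {x | |x 0| ≤ r ∧ |x 1| ≤ r}

/-- The density of a packing: the limsup, as `r → ∞`, of the proportion of the
square `[-r, r]²` covered by the disks. -/
def density (P : Set Disk) : ℝ :=
  Filter.limsup
    (fun r : ℝ => (MeasureTheory.volume (packingUnion P ∩ square r)).toReal / (4 * r ^ 2))
    Filter.atTop

end


open MeasureTheory ENNReal in
lemma thue_vol_sector (R α : ℝ) (hR : 0 < R) (h0 : 0 < α) (hα : α < Real.pi) :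
    volume {z : ℂ | ‖z‖ < R ∧ ‖z‖ * Real.cos α < z.re} ≤ ENNReal.ofReal (R ^ 2 * α) := by
  have hm : MeasurableSet {z : ℂ | ‖z‖ < R ∧ ‖z‖ * Real.cos α < z.re} := by
    apply IsOpen.measurableSet
    have o1 : IsOpen {z : ℂ | ‖z‖ < R} := isOpen_lt (by fun_prop) (by fun_prop)
    have o2 : IsOpen {z : ℂ | ‖z‖ * Real.cos α < z.re} := isOpen_lt (by fun_prop) (by fun_prop)
    exact o1.inter o2
  rw [← lintegral_indicator_one hm, ← Complex.lintegral_comp_polarCoord_symm]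
  calc _ ≤ ∫⁻ p : ℝ × ℝ in polarCoord.target,
        (Ioo 0 R ×ˢ Ioo (-α) α).indicator (fun p => ENNReal.ofReal p.1) p := by
        apply setLIntegral_mono' polarCoord.open_target.measurableSet
        rintro ⟨r, θ⟩ ⟨hr, hθ⟩
        simp only [mem_Ioi, mem_Ioo] at hr hθ
        simp only [indicator, mem_ofPred_eq, Complex.norm_polarCoord_symm, abs_of_pos hr,
          mem_prod, mem_Ioo, smul_eq_mul]
        split_ifs with h1 h2
        · simp
        · exfalso
          apply h2
          obtain ⟨ha, hb⟩ := h1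
          have hb' : r * Real.cos α < r * Real.cos θ := by
            rw [Complex.polarCoord_symm_apply] at hb
            simpa [Complex.cos_ofReal_re] using hb
          have hc := lt_of_mul_lt_mul_left hb' hr.le
          refine ⟨⟨hr, ha⟩, ?_⟩
          rw [← abs_lt]
          by_contra hcon
          push Not at hcon
          have := Real.cos_le_cos_of_nonneg_of_le_pi h0.le (abs_lt.2 hθ).le hcon
          rw [Real.cos_abs] at this
          linarith
        · simp
        · simp
    _ ≤ ∫⁻ p : ℝ × ℝ, (Ioo 0 R ×ˢ Ioo (-α) α).indicator (fun p => ENNReal.ofReal p.1) p :=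
        setLIntegral_le_lintegral _ _
    _ = ∫⁻ p : ℝ × ℝ in Ioo 0 R ×ˢ Ioo (-α) α, ENNReal.ofReal p.1 := by
        rw [lintegral_indicator (measurableSet_Ioo.prod measurableSet_Ioo)]
    _ = (∫⁻ r in Ioo 0 R, ENNReal.ofReal r) * ENNReal.ofReal (2 * α) := by
        rw [Measure.volume_eq_prod, setLIntegral_prod _ (by fun_prop)]
        simp only [lintegral_const, MeasurableSet.univ, Measure.restrict_apply, univ_inter,
          Real.volume_Ioo]
        rw [lintegral_mul_const _ (by fun_prop)]
        congr 2; ring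
    _ = ENNReal.ofReal (R ^ 2 / 2) * ENNReal.ofReal (2 * α) := by
        congr 1
        rw [← ofReal_integral_eq_lintegral_ofReal]
        · rw [← integral_Ioc_eq_integral_Ioo, ← intervalIntegral.integral_of_le hR.le, integral_id]
          simp
        · exact (continuous_id.integrableOn_Icc (a := 0) (b := R)).mono_set Ioo_subset_Icc_self
        · exact (ae_restrict_mem measurableSet_Ioo).mono fun x hx => hx.1.le
    _ = _ := by
        rw [← ENNReal.ofReal_mul (by positivity)]
        congr 1; ring

open MeasureTheory ENNReal in
lemma thue_vol_triangle (R α : ℝ) (hR : 0 < R) (h0 : 0 < α) (hα : α < Real.pi / 2) :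
    ENNReal.ofReal (R ^ 2 * (Real.sin α * Real.cos α)) ≤
    volume {z : ℂ | ‖z‖ < R ∧ ‖z‖ * Real.cos α < z.re ∧ z.re < R * Real.cos α} := by
  have hc : 0 < Real.cos α := Real.cos_pos_of_mem_Ioo ⟨by linarith, hα⟩
  have hs : 0 < Real.sin α := Real.sin_pos_of_pos_of_lt_pi h0 (by linarith)
  set k := Real.sin α / Real.cos α with hk
  have hkc : k * Real.cos α = Real.sin α := by rw [hk]; field_simp
  have hk0 : 0 < k := by positivity
  have key := volume_regionBetween_eq_integral (μ := (volume : Measure ℝ))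
    (f := fun x => -(k * x)) (g := fun x => k * x) (s := Ioo 0 (R * Real.cos α))
    (((by fun_prop : Continuous fun x : ℝ => -(k * x)).integrableOn_Icc).mono_set
      Ioo_subset_Icc_self)
    (((by fun_prop : Continuous fun x : ℝ => (k * x)).integrableOn_Icc).mono_set
      Ioo_subset_Icc_self)
    measurableSet_Ioo (fun x hx => by have := mul_pos hk0 hx.1; linarith)
  have hint : ∫ y in Ioo 0 (R * Real.cos α), ((fun x => k * x) - fun x => -(k * x)) y =
      R ^ 2 * (Real.sin α * Real.cos α) := by
    rw [← integral_Ioc_eq_integral_Ioo, ← intervalIntegral.integral_of_le (by positivity)]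
    have : ((fun x => k * x) - fun x => -(k * x)) = fun x => (2 * k) * x := by
      ext x; simp; ring
    rw [this, intervalIntegral.integral_const_mul, integral_id, ← hkc]
    ring
  rw [hint, ← Measure.volume_eq_prod,
    ← Complex.volume_preserving_equiv_real_prod.measure_preimage_equiv] at key
  rw [← key]
  apply measure_mono
  intro z hz
  have hz' : (0 < z.re ∧ z.re < R * Real.cos α) ∧ -(k * z.re) < z.im ∧ z.im < k * z.re := hz
  obtain ⟨⟨h1, h2⟩, h3, h4⟩ := hz'
  have h5 : ‖z‖ * Real.cos α < z.re := by
    apply lt_of_pow_lt_pow_left₀ 2 h1.le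
    have h6 : z.im ^ 2 < (k * z.re) ^ 2 := sq_lt_sq' h3 h4
    have h7 : z.im ^ 2 * Real.cos α ^ 2 < (k * z.re) ^ 2 * Real.cos α ^ 2 := by gcongr
    have h8 : (k * z.re) ^ 2 * Real.cos α ^ 2 = Real.sin α ^ 2 * z.re ^ 2 := by
      rw [← hkc]; ring
    have h9 : ‖z‖ ^ 2 = z.re ^ 2 + z.im ^ 2 := by
      rw [Complex.sq_norm, Complex.normSq_apply]; ring
    have := Real.sin_sq_add_cos_sq α
    rw [mul_pow, h9]
    have : Real.sin α ^ 2 = 1 - Real.cos α ^ 2 := by linarith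
    rw [this] at h8
    nlinarith
  exact ⟨by exact lt_of_mul_lt_mul_right (h5.trans h2) hc.le, h5, h2⟩

lemma thue_sin_bound (α : ℝ) (h0 : 0 < α) (hα : α ≤ Real.pi / 6) :
    3 * √3 / (2 * Real.pi) * α ≤ Real.sin α * Real.cos α := by
  have hp := Real.pi_pos
  have hcv := strictConcaveOn_sin_Icc.concaveOn.2
  have h := @hcv 0 ⟨le_rfl, hp.le⟩ (Real.pi / 3) ⟨by positivity, by linarith⟩
    (1 - 6 * α / Real.pi) (6 * α / Real.pi) (by rw [sub_nonneg, div_le_one hp]; linarith) (by positivity) (by ring)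
  simp only [smul_eq_mul, mul_zero, Real.sin_zero, zero_add, Real.sin_pi_div_three] at h
  have h2 : 6 * α / Real.pi * (Real.pi / 3) = 2 * α := by field_simp; ring
  rw [h2, Real.sin_two_mul] at h
  have : 3 * √3 / (2 * Real.pi) * α = (6 * α / Real.pi * (√3 / 2)) / 2 := by field_simp; ring
  linarith

open MeasureTheory ENNReal in
lemma thue_area (R h : ℝ) (hR : 0 < R) (hR2 : R ^ 2 = 4 / 3) (h1 : 1 ≤ h) :
    ENNReal.ofReal (3 * √3 / (2 * Real.pi)) * volume {z : ℂ | ‖z‖ < R ∧ ‖z‖ * (h / R) < z.re} ≤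
    volume {z : ℂ | ‖z‖ < R ∧ ‖z‖ * (h / R) < z.re ∧ z.re < h} := by
  rcases le_or_gt R h with hh | hh
  · have : {z : ℂ | ‖z‖ < R ∧ ‖z‖ * (h / R) < z.re} = ∅ := by
      ext z
      simp only [mem_ofPred_eq, mem_empty_iff_false, iff_false, not_and, not_lt]
      intro _
      have : 1 ≤ h / R := by rwa [one_le_div hR]
      have h3 := Complex.re_le_norm z
      nlinarith [norm_nonneg z]
    rw [this]; simp
  · have hq : h / R < 1 := by rwa [div_lt_one hR]
    have hq0 : 0 < h / R := by positivity
    have hcos := Real.cos_arccos (x := h / R) (by linarith) hq.le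
    have ha0 := Real.arccos_pos.2 hq
    have ha1 : Real.arccos (h / R) ≤ Real.pi / 6 := by
      rw [← Real.arccos_cos (x := Real.pi / 6) (by positivity) (by linarith [Real.pi_pos])]
      apply Real.arccos_le_arccos
      rw [Real.cos_pi_div_six, le_div_iff₀ hR]
      have h3 : (√3) ^ 2 = 3 := Real.sq_sqrt (by norm_num)
      have : (√3 / 2 * R) ^ 2 = 1 := by rw [mul_pow, div_pow, h3, hR2]; norm_num
      have : √3 / 2 * R = 1 := by
        have h0 : 0 ≤ √3 / 2 * R := by positivity
        nlinarith
      linarith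
    have hb := thue_vol_sector R _ hR ha0 (by linarith [Real.pi_pos])
    have hc := thue_vol_triangle R _ hR ha0 (by linarith [Real.pi_pos])
    rw [hcos] at hb hc
    have e : R * (h / R) = h := by field_simp
    rw [e] at hc
    refine le_trans ?_ hc
    refine (mul_le_mul_right hb _).trans ?_
    rw [← ENNReal.ofReal_mul (by positivity)]
    apply ENNReal.ofReal_le_ofReal
    have := thue_sin_bound _ ha0 ha1
    rw [hcos] at this
    nlinarith [sq_nonneg R]

def thueT (R : ℝ) (w : Plane) : Set Plane :=
  {x | ‖x‖ < R ∧ ‖x‖ * (‖w‖ ^ 2 / (2 * R)) < inner ℝ x w}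

lemma thueT_open (R : ℝ) (w : Plane) : IsOpen (thueT R w) := by
  have o1 : IsOpen {z : Plane | ‖z‖ < R} := isOpen_lt (by fun_prop) (by fun_prop)
  have o2 : IsOpen {x : Plane | ‖x‖ * (‖w‖ ^ 2 / (2 * R)) < inner ℝ x w} :=
    isOpen_lt (by fun_prop) (by fun_prop)
  exact o1.inter o2

lemma thue_exists_isometry (w : Plane) (hw : w ≠ 0) :
    ∃ φ : Plane ≃ₗᵢ[ℝ] ℂ, φ w = (‖w‖ : ℂ) := by
  let e : Plane ≃ₗᵢ[ℝ] ℂ := Complex.orthonormalBasisOneI.repr.symm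
  have hn : ‖e w‖ = ‖w‖ := e.norm_map w
  have hw0 : (‖w‖ : ℂ) ≠ 0 := by simpa using hw
  have he : e w ≠ 0 := by simpa using hw
  have hb : (‖w‖ : ℂ) / e w ∈ Submonoid.unitSphere ℂ := by
    change _ ∈ sphere (0 : ℂ) 1
    rw [mem_sphere_zero_iff_norm, norm_div, hn]
    simp [hw]
  refine ⟨e.trans (rotation ⟨_, hb⟩), ?_⟩
  simp only [LinearIsometryEquiv.trans_apply]
  change (‖w‖ : ℂ) / e w * e w = _
  field_simp

lemma thue_norm_lt (x w : Plane) : ‖x‖ < ‖x - w‖ ↔ 2 * inner ℝ x w < ‖w‖ ^ 2 := by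
  have := norm_sub_sq_real x w
  rw [← sq_lt_sq₀ (norm_nonneg _) (norm_nonneg _)]
  constructor <;> intro h <;> linarith

open MeasureTheory ENNReal in
lemma thue_area_plane (R : ℝ) (hR : 0 < R) (hR2 : R ^ 2 = 4 / 3) (w : Plane) (hw : 2 ≤ ‖w‖) :
    ENNReal.ofReal (3 * √3 / (2 * Real.pi)) * volume (thueT R w) ≤
    volume (thueT R w ∩ {x | ‖x‖ < ‖x - w‖}) := by
  have hw0 : 0 < ‖w‖ := by linarith
  obtain ⟨φ, hφ⟩ := thue_exists_isometry w (norm_pos_iff.1 hw0)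
  have hin : ∀ x, inner ℝ x w = (φ x).re * ‖w‖ := by
    intro x
    rw [← φ.inner_map_map x w, hφ, Complex.inner]
    simp
    try ring
  have h := thue_area R (‖w‖ / 2) hR hR2 (by linarith)
  have hmp := φ.measurePreserving
  have hme : MeasurableEmbedding φ := φ.toHomeomorph.measurableEmbedding
  rw [← hmp.measure_preimage_emb hme, ← hmp.measure_preimage_emb hme] at h
  have e1 : ∀ x, ‖x‖ * (‖w‖ / 2 / R) < (φ x).re ↔
      ‖x‖ * (‖w‖ ^ 2 / (2 * R)) < inner ℝ x w := by
    intro x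
    rw [hin, ← mul_lt_mul_iff_left₀ hw0]
    have : ‖x‖ * (‖w‖ / 2 / R) * ‖w‖ = ‖x‖ * (‖w‖ ^ 2 / (2 * R)) := by field_simp
    rw [this]
  convert h using 3
  · ext x
    simp only [thueT, mem_ofPred_eq, mem_preimage, LinearIsometryEquiv.norm_map, e1]
  · ext x
    have e2 : ‖x‖ < ‖x - w‖ ↔ (φ x).re < ‖w‖ / 2 := by
      rw [thue_norm_lt, hin]
      constructor <;> intro h <;> nlinarith
    simp only [thueT, mem_ofPred_eq, mem_preimage, mem_inter_iff, LinearIsometryEquiv.norm_map, e1,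
      e2, and_assoc]

lemma thueT_disjoint (R : ℝ) (hR : 0 < R) (hR2 : R ^ 2 = 4 / 3) (w w' : Plane) (hw : 2 ≤ ‖w‖)
    (hw' : 2 ≤ ‖w'‖) (hd : 2 ≤ ‖w - w'‖) : Disjoint (thueT R w) (thueT R w') := by
  rw [Set.disjoint_left]
  rintro x ⟨hx, h1⟩ ⟨-, h2⟩
  have hx0 : 0 < ‖x‖ := by
    rw [norm_pos_iff]; rintro rfl; simp at h1
  have hy : ‖(R / ‖x‖) • x‖ = R := by
    rw [norm_smul, Real.norm_of_nonneg (by positivity)]; field_simp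
  have hi : ∀ v : Plane, ‖x‖ * (‖v‖ ^ 2 / (2 * R)) < inner ℝ x v →
      ‖v‖ ^ 2 < 2 * inner ℝ ((R / ‖x‖) • x) v := by
    intro v hv
    rw [real_inner_smul_left]
    have h3 : R / ‖x‖ * (‖x‖ * (‖v‖ ^ 2 / (2 * R))) < R / ‖x‖ * inner ℝ x v := by gcongr
    have h4 : R / ‖x‖ * (‖x‖ * (‖v‖ ^ 2 / (2 * R))) = ‖v‖ ^ 2 / 2 := by field_simp
    linarith
  have g1 := hi w h1
  have g2 := hi w' h2
  generalize (R / ‖x‖) • x = y at hy g1 g2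
  have k1 := norm_sub_sq_real (w + w') ((3 : ℝ) • y)
  rw [norm_smul, mul_pow, hy, hR2, real_inner_smul_right, inner_add_left,
    real_inner_comm, real_inner_comm y w'] at k1
  norm_num at k1
  have k2 := norm_sub_sq_real w w'
  have k3 := norm_add_sq_real w w'
  have := sq_nonneg ‖w + w' - (3 : ℝ) • y‖
  nlinarith

def thueS (R : ℝ) (C : Set Plane) : Set Plane :=
  {x | ‖x‖ < R ∧ ∀ w ∈ C, ‖x‖ < ‖x - w‖}

open MeasureTheory in
lemma thueS_measurable (R : ℝ) (C : Set Plane) (hC : C.Countable) : MeasurableSet (thueS R C) := by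
  have : thueS R C = {x | ‖x‖ < R} ∩ ⋂ w ∈ C, {x | ‖x‖ < ‖x - w‖} := by
    ext x; simp [thueS]
  rw [this]
  refine MeasurableSet.inter (isOpen_lt (by fun_prop) (by fun_prop)).measurableSet ?_
  exact MeasurableSet.biInter hC fun w _ =>
    (isOpen_lt (by fun_prop) (by fun_prop)).measurableSet

open MeasureTheory ENNReal in
lemma thueS_area (R : ℝ) (hR : 0 < R) (hR2 : R ^ 2 = 4 / 3) (C : Set Plane) (hC : C.Countable)
    (hC2 : ∀ w ∈ C, 2 ≤ ‖w‖) (hCd : ∀ w ∈ C, ∀ w' ∈ C, w ≠ w' → 2 ≤ ‖w - w'‖) :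
    ENNReal.ofReal √12 ≤ volume (thueS R C) := by
  set μ := ENNReal.ofReal (3 * √3 / (2 * Real.pi)) with hμ
  have hμ1 : μ ≤ 1 := by
    rw [hμ, ENNReal.ofReal_le_one]
    have := thue_sin_bound (Real.pi / 6) (by positivity) le_rfl
    rw [div_le_one (by positivity)]
    have h3 : √3 < 2 := by rw [Real.sqrt_lt' (by norm_num)]; norm_num
    linarith [Real.pi_gt_three]
  set U := ⋃ w ∈ C, thueT R w with hU
  have hUm : MeasurableSet U := MeasurableSet.biUnion hC fun w _ => (thueT_open R w).measurableSet
  have hdis : C.PairwiseDisjoint (thueT R) := fun w hw w' hw' hne =>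
    thueT_disjoint R hR hR2 w w' (hC2 w hw) (hC2 w' hw') (hCd w hw w' hw' hne)
  have hout : ∀ x, ‖x‖ < R → ∀ w ∈ C, x ∉ thueT R w → ‖x‖ < ‖x - w‖ := by
    intro x hx w hw hxT
    rw [thue_norm_lt]
    by_contra hcon
    apply hxT
    refine ⟨hx, ?_⟩
    have hw0 : 0 < ‖w‖ := by linarith [hC2 w hw]
    have : ‖x‖ * (‖w‖ ^ 2 / (2 * R)) < R * (‖w‖ ^ 2 / (2 * R)) := by gcongr
    have e : R * (‖w‖ ^ 2 / (2 * R)) = ‖w‖ ^ 2 / 2 := by field_simp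
    linarith
  have h1 : volume (thueS R C) = volume (thueS R C ∩ U) + volume (thueS R C \ U) :=
    (measure_inter_add_sdiff _ hUm).symm
  have h2 : μ * volume (ball (0 : Plane) R \ U) ≤ volume (thueS R C \ U) := by
    refine (mul_le_of_le_one_left (by simp) hμ1).trans (measure_mono ?_)
    rintro x ⟨hx, hxU⟩
    rw [mem_ball_zero_iff] at hx
    refine ⟨⟨hx, fun w hw => hout x hx w hw fun hT => hxU ?_⟩, hxU⟩
    exact mem_biUnion hw hT
  have h3 : μ * volume U ≤ volume (thueS R C ∩ U) := by
    rw [hU, measure_biUnion hC hdis fun w _ => (thueT_open R w).measurableSet,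
      ← ENNReal.tsum_mul_left]
    have e : thueS R C ∩ ⋃ w ∈ C, thueT R w = ⋃ w ∈ C, (thueS R C ∩ thueT R w) := by
      rw [inter_iUnion₂]
    rw [e, measure_biUnion hC (hdis.mono fun w => inter_subset_right) fun w _ =>
      (thueS_measurable R C hC).inter (thueT_open R w).measurableSet]
    apply ENNReal.tsum_le_tsum
    rintro ⟨w, hw⟩
    refine (thue_area_plane R hR hR2 w (hC2 w hw)).trans (measure_mono ?_)
    rintro x ⟨hxT, hxw⟩
    refine ⟨⟨hxT.1, fun w' hw' => ?_⟩, hxT⟩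
    rcases eq_or_ne w' w with rfl | hne
    · exact hxw
    · exact hout x hxT.1 w' hw' fun hT => (Set.disjoint_left.1 (hdis hw' hw hne)) hT hxT
  have h4 : volume (ball (0 : Plane) R) ≤ volume U + volume (ball (0 : Plane) R \ U) := by
    rw [← measure_inter_add_sdiff (ball (0 : Plane) R) hUm]
    gcongr
    exact inter_subset_right
  calc ENNReal.ofReal √12 = μ * volume (ball (0 : Plane) R) := by
        rw [EuclideanSpace.volume_ball_fin_two, hμ,
          ← ENNReal.ofReal_pow hR.le, ← ENNReal.ofReal_mul (by positivity),
          ← ENNReal.ofReal_mul (by positivity), hR2]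
        congr 1
        have : (12 : ℝ) = 2 ^ 2 * 3 := by norm_num
        rw [this, Real.sqrt_mul (by norm_num), Real.sqrt_sq (by norm_num)]
        have := Real.pi_ne_zero
        field_simp
        try norm_num
    _ ≤ μ * (volume U + volume (ball (0 : Plane) R \ U)) := by gcongr
    _ = μ * volume U + μ * volume (ball (0 : Plane) R \ U) := mul_add _ _ _
    _ ≤ _ := by rw [h1]; gcongr

open MeasureTheory ENNReal in
lemma thue_volume_square (r : ℝ) (hr : 0 ≤ r) : volume (square r) = ENNReal.ofReal (4 * r ^ 2) := by
  have h := (PiLp.volume_preserving_ofLp (Fin 2)).measure_preimage_equiv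
    (f := (MeasurableEquiv.toLp 2 (Fin 2 → ℝ)).symm) (Icc (fun _ => -r) (fun _ => r))
  rw [Real.volume_Icc_pi] at h
  convert h using 1
  · congr 1
    ext x
    change _ ↔ (WithLp.ofLp x) ∈ Icc (fun _ => -r) (fun _ => r)
    simp [square, Pi.le_def, abs_le, Fin.forall_fin_two]
    tauto
  · rw [Fin.prod_univ_two, ← ENNReal.ofReal_mul (by linarith)]
    congr 1; ring

open MeasureTheory ENNReal in
lemma thue_finite (P : Set Disk) (hP : IsPacking P)
    (hradii : ∀ d ∈ P, d.radius = 1) (r : ℝ) (hr : 0 ≤ r) :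
    volume (packingUnion P ∩ square r) ≤
      ENNReal.ofReal (Real.pi / √12) * ENNReal.ofReal (4 * (r + 3) ^ 2) := by
  set R : ℝ := √(4 / 3) with hRdef
  have hR : 0 < R := by positivity
  have hR2 : R ^ 2 = 4 / 3 := Real.sq_sqrt (by norm_num)
  have hRle : R ≤ 2 := by nlinarith
  have hdist : ∀ d ∈ P, ∀ d' ∈ P, d ≠ d' → 2 ≤ ‖d'.center - d.center‖ := by
    intro d hd d' hd' hne
    have := hP d hd d' hd' hne
    rw [Disk.set, Disk.set, interior_closedBall _ d.radius_pos.ne',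
      interior_closedBall _ d'.radius_pos.ne', hradii d hd, hradii d' hd',
      disjoint_ball_ball_iff one_pos one_pos, dist_comm, dist_eq_norm] at this
    linarith
  have hPc : P.Countable := by
    refine Set.PairwiseDisjoint.countable_of_isOpen (s := fun d => interior d.set)
      (fun d hd d' hd' hne => hP d hd d' hd' hne) (fun _ _ => isOpen_interior) ?_
    intro d hd
    rw [Disk.set, interior_closedBall _ d.radius_pos.ne']
    exact nonempty_ball.2 d.radius_pos
  -- coordinates are bounded by the norm
  have hco : ∀ (x : Plane) (i : Fin 2), |x i| ≤ ‖x‖ := fun x i => by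
    simpa using PiLp.norm_apply_le x i
  set Q : Set Disk := {d ∈ P | d.center ∈ square (r + 1)} with hQ
  have hQc : Q.Countable := hPc.mono fun d hd => hd.1
  let V : Disk → Set Plane := fun d =>
    (fun x => x - d.center) ⁻¹' thueS R ((fun d' : Disk => d'.center - d.center) '' (P \ {d}))
  have hcnt : ∀ d, ((fun d' : Disk => d'.center - d.center) '' (P \ {d})).Countable :=
    fun d => (hPc.mono sdiff_subset).image _
  have hmp : ∀ d : Disk, MeasurePreserving (fun x : Plane => x - d.center) :=
    fun d => measurePreserving_sub_right volume d.center
  have hVm : ∀ d, MeasurableSet (V d) := fun d =>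
    (hmp d).measurable (thueS_measurable R _ (hcnt d))
  have hVarea : ∀ d ∈ Q, ENNReal.ofReal √12 ≤ volume (V d) := by
    intro d hd
    rw [(hmp d).measure_preimage (thueS_measurable R _ (hcnt d)).nullMeasurableSet]
    apply thueS_area R hR hR2 _ (hcnt d)
    · rintro _ ⟨d', hd', rfl⟩
      exact hdist d hd.1 d' hd'.1 (Ne.symm hd'.2)
    · rintro _ ⟨d', hd', rfl⟩ _ ⟨d'', hd'', rfl⟩ hne
      simp only [sub_sub_sub_cancel_right]
      exact hdist d'' hd''.1 d' hd'.1 (by rintro rfl; exact hne rfl)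
  have hVd : Q.PairwiseDisjoint V := by
    intro d hd d' hd' hne
    refine Set.disjoint_left.2 ?_
    intro x hx hx'
    have h1 := hx.2 _ ⟨d', ⟨hd'.1, Ne.symm hne⟩, rfl⟩
    have h2 := hx'.2 _ ⟨d, ⟨hd.1, hne⟩, rfl⟩
    simp only [sub_sub_sub_cancel_right] at h1 h2
    exact lt_asymm h1 h2
  have hVsub : ⋃ d ∈ Q, V d ⊆ square (r + 3) := by
    refine iUnion₂_subset fun d hd x hx => ?_
    have h1 : ‖x - d.center‖ < R := hx.1
    have h2 := hd.2
    have key : ∀ i, |d.center i| ≤ r + 1 → |x i| ≤ r + 3 := by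
      intro i hi
      have h4 := hco (x - d.center) i
      have h3 : (x - d.center) i = x i - d.center i := rfl
      have := abs_sub_abs_le_abs_sub (x i) (d.center i)
      rw [h3] at h4
      linarith
    exact ⟨key 0 h2.1, key 1 h2.2⟩
  have hsub : packingUnion P ∩ square r ⊆ ⋃ d ∈ Q, closedBall d.center 1 := by
    rintro x ⟨hx, hxs⟩
    obtain ⟨d, hd, hxd⟩ := mem_iUnion₂.1 hx
    rw [Disk.set, hradii d hd] at hxd
    refine mem_biUnion (x := d) ⟨hd, ?_⟩ hxd
    rw [mem_closedBall, dist_eq_norm, norm_sub_rev] at hxd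
    have key : ∀ i, |x i| ≤ r → |d.center i| ≤ r + 1 := by
      intro i hi
      have h4 := hco (d.center - x) i
      have h3 : (d.center - x) i = d.center i - x i := rfl
      have := abs_sub_abs_le_abs_sub (d.center i) (x i)
      rw [h3] at h4
      linarith
    exact ⟨key 0 hxs.1, key 1 hxs.2⟩
  calc volume (packingUnion P ∩ square r) ≤ volume (⋃ d ∈ Q, closedBall d.center 1) :=
        measure_mono hsub
    _ ≤ ∑' d : Q, volume (closedBall (d : Disk).center 1) := measure_biUnion_le _ hQc _
    _ ≤ ∑' d : Q, ENNReal.ofReal (Real.pi / √12) * volume (V d) := by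
        apply ENNReal.tsum_le_tsum
        rintro ⟨d, hd⟩
        rw [EuclideanSpace.volume_closedBall_fin_two]
        calc _ = ENNReal.ofReal (Real.pi / √12) * ENNReal.ofReal √12 := by
              rw [← ENNReal.ofReal_mul (by positivity), div_mul_cancel₀ _ (by positivity)]
              simp [← NNReal.coe_real_pi]
          _ ≤ _ := by gcongr; exact hVarea d hd
    _ = ENNReal.ofReal (Real.pi / √12) * volume (⋃ d ∈ Q, V d) := by
        rw [ENNReal.tsum_mul_left, measure_biUnion hQc hVd fun d _ => hVm d]
    _ ≤ _ := by
        rw [← thue_volume_square (r + 3) (by linarith)]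
        gcongr

/-- every packing by disks of radius 1 has density at most `π/√12`. -/
theorem density_le_of_unit_packing (P : Set Disk) (hP : IsPacking P)
    (hradii : ∀ d ∈ P, d.radius = 1) :
    density P ≤ Real.pi / Real.sqrt 12 := by
  have hlim : Filter.Tendsto (fun r : ℝ => Real.pi / √12 * (1 + 3 * r⁻¹) ^ 2) Filter.atTop
      (nhds (Real.pi / √12)) := by
    have h : Filter.Tendsto (fun r : ℝ => Real.pi / √12 * (1 + 3 * r⁻¹) ^ 2) Filter.atTop
      (nhds (Real.pi / √12 * (1 + 3 * 0) ^ 2)) :=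
      (((tendsto_inv_atTop_zero.const_mul 3).const_add 1).pow 2).const_mul _
    simpa using h
  rw [← hlim.limsup_eq]
  apply Filter.limsup_le_limsup
  · filter_upwards [Filter.eventually_gt_atTop 0] with r hr
    rw [div_le_iff₀ (by positivity)]
    have h := thue_finite P hP hradii r hr.le
    rw [← ENNReal.ofReal_mul (by positivity)] at h
    have h2 := ENNReal.toReal_le_of_le_ofReal (by positivity) h
    refine h2.trans (le_of_eq ?_)
    field_simp
  · exact Filter.IsCoboundedUnder.of_frequently_ge (a := 0)
      (Filter.Frequently.of_forall fun r => by positivity)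
  · exact hlim.isBoundedUnder_le
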